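/- arXiv:1712.01973 — 2 statements merged into one kernel-verified Lean document; each statement's English description precedes it below -/
import Mathlib

section
/- Let P ⊆ ℝ^d be a full-dimensional polytope which does not contain the origin, let v be any point of P, and let λ > μ ≥ 0 be real numbers. Then the set {s > 0 : L_{P+λv}(s) ≠ L_{P+μv}(s)} is infinite. -/
open Set MeasureTheory Pointwise

/-- The set of integer lattice points in `ℝ^d` (as `Fin d → ℝ`). -/
def latticePts (d : ℕ) : Set (Fin d → ℝ) := {x | ∀ i, ∃ m : ℤ, x i = m}

/-- The real-parameter Ehrhart function: number of lattice points in `s • P`. -/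
noncomputable def ehrhart {d : ℕ} (P : Set (Fin d → ℝ)) (s : ℝ) : ℕ :=
  ((s • P) ∩ latticePts d).ncard

/-- Translate of a set by a vector. -/
def translateSet {d : ℕ} (P : Set (Fin d → ℝ)) (v : Fin d → ℝ) : Set (Fin d → ℝ) :=
  (fun x => x + v) '' P

/-- A polytope: convex hull of a nonempty finite set of points. -/
def IsPolytope {d : ℕ} (P : Set (Fin d → ℝ)) : Prop :=
  ∃ V : Finset (Fin d → ℝ), V.Nonempty ∧ P = convexHull ℝ (V : Set (Fin d → ℝ))

/-- A rational polytope: convex hull of a nonempty finite set of rational points. -/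
def IsRationalPolytope {d : ℕ} (P : Set (Fin d → ℝ)) : Prop :=
  ∃ V : Finset (Fin d → ℝ), V.Nonempty ∧ (∀ v ∈ V, ∀ i, ∃ q : ℚ, v i = (q : ℝ)) ∧
    P = convexHull ℝ (V : Set (Fin d → ℝ))

/-- Standard inner product on `Fin d → ℝ`. -/
def dotProd {d : ℕ} (a x : Fin d → ℝ) : ℝ := ∑ i, a i * x i

/-- A semi-rational polytope: a polytope expressible as a finite intersection of
half-spaces with integer normal vectors. -/
def IsSemiRationalPolytope {d : ℕ} (P : Set (Fin d → ℝ)) : Prop :=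
  IsPolytope P ∧ ∃ (n : ℕ) (a : Fin n → Fin d → ℤ) (b : Fin n → ℝ),
    P = ⋂ i, {x : Fin d → ℝ | dotProd (fun j => (a i j : ℝ)) x ≤ b i}

/-!
For a compact convex set `Q` avoiding the origin, the dilates `s • Q` containing a given point are
those with `s` in a closed interval, whose left endpoint is the time at which the point enters. The
jump of `s ↦ #(s • Q ∩ ℤ^d)` from the left at `s` is the number of lattice points entering at time
`s`, and the nonzero lattice points of `b • conv (Q ∪ {0})` are those entering at time at most `b`.
Hence if the Ehrhart functions of `Q` and `Q'` agree for large `s`, those of `conv (Q ∪ {0})` and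
`conv (Q' ∪ {0})` eventually differ by a constant, so these two hulls have the same volume. But if
`Q' = Q + w` with `w` a positive multiple of a point of `Q`, then `conv (Q ∪ {0}) + w` is a subset
of `conv (Q' ∪ {0})` missing the origin, and so has strictly smaller volume.
-/

open Filter Topology

theorem ncard_eq_of_ncard_fiber_eq {α β γ : Type*} {A : Set α} {B : Set β} (hA : A.Finite)
    (hB : B.Finite) (f : α → γ) (g : β → γ)
    (h : ∀ c, {x ∈ A | f x = c}.ncard = {y ∈ B | g y = c}.ncard) : A.ncard = B.ncard := by
  classical
  lift A to Finset α using hA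
  lift B to Finset β using hB
  have hmap : A.val.map f = B.val.map g := by
    ext c
    rw [Multiset.count_map, Multiset.count_map, ← Finset.filter_val, ← Finset.filter_val,
      Finset.card_val, Finset.card_val, ← Set.ncard_coe_finset, ← Set.ncard_coe_finset]
    simpa [eq_comm] using h c
  simpa using congrArg Multiset.card hmap

theorem eventually_nhdsLT_mem_iff_of_ordConnected {α : Type*} [ConditionallyCompleteLinearOrder α]
    [TopologicalSpace α] [OrderTopology α] {T : Set α} (hclosed : IsClosed T)
    (hconn : T.OrdConnected) (hbdd : BddBelow T) (s : α) :
    ∀ᶠ t in 𝓝[<] s, (t ∈ T ↔ s ∈ T ∧ sInf T < s) := by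
  by_cases hs : s ∈ T
  · rcases (csInf_le hbdd hs).lt_or_eq with hlt | heq
    · filter_upwards [Ioo_mem_nhdsLT hlt] with t ht
      have hInf : sInf T ∈ T := hclosed.csInf_mem ⟨s, hs⟩ hbdd
      exact iff_of_true (hconn.out hInf hs ⟨ht.1.le, ht.2.le⟩) ⟨hs, hlt⟩
    · filter_upwards [self_mem_nhdsWithin] with t (ht : t < s)
      exact iff_of_false (fun htT => ((csInf_le hbdd htT).trans_lt ht).ne heq) fun h => h.2.ne heq
  · filter_upwards [nhdsWithin_le_nhds (hclosed.isOpen_compl.mem_nhds hs)] with t ht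
    exact iff_of_false ht fun h => hs h.1

theorem measureReal_lt_of_ssubset_of_convex {E : Type*} [AddCommGroup E] [Module ℝ E]
    [TopologicalSpace E] [IsTopologicalAddGroup E] [ContinuousSMul ℝ E] [MeasurableSpace E]
    [OpensMeasurableSpace E] {μ : Measure E} [μ.IsOpenPosMeasure] {H K : Set E}
    (hH : Convex ℝ H) (hint : (interior H).Nonempty) (hfin : μ H ≠ ⊤) (hK : IsClosed K)
    (hKH : K ⊂ H) : μ.real K < μ.real H := by
  obtain ⟨hsub, z, hzH, hzK⟩ := Set.ssubset_iff_exists.1 hKH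
  have hz : z ∈ closure (interior H) := by
    rw [hH.closure_interior_eq_closure_of_nonempty_interior hint]
    exact subset_closure hzH
  have hne : (Kᶜ ∩ interior H).Nonempty := mem_closure_iff.1 hz _ hK.isOpen_compl hzK
  have hpos : 0 < μ (H \ K) :=
    ((hK.isOpen_compl.inter isOpen_interior).measure_pos μ hne).trans_le
      (measure_mono fun x hx => ⟨interior_subset hx.2, hx.1⟩)
  have hpos' : 0 < μ.real (H \ K) :=
    ENNReal.toReal_pos hpos.ne' (measure_ne_top_of_subset Set.sdiff_subset hfin)
  rw [measureReal_sdiff hsub hK.measurableSet hfin] at hpos'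
  exact sub_pos.1 hpos'

section Dilates

variable {E : Type*} [NormedAddCommGroup E] [NormedSpace ℝ E] {Q : Set E} {x : E} {s t b : ℝ}

/-- The positive dilation factors `s` for which `s • Q` contains `x`. -/
def dilationTimes (Q : Set E) (x : E) : Set ℝ := {s | 0 < s ∧ x ∈ s • Q}

/-- The least positive dilation factor `s` for which `s • Q` contains `x`; it has the junk value `0`
when there is none. -/
noncomputable def entryTime (Q : Set E) (x : E) : ℝ := sInf (dilationTimes Q x)

/-- The convex hull of `Q` and the origin. -/
def originHull (Q : Set E) : Set E := convexHull ℝ (insert 0 Q)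

/-- The points of `Λ` whose entry time into the dilates of `Q` exists and belongs to `I`. -/
def entrants (Q Λ : Set E) (I : Set ℝ) : Set E :=
  {x ∈ Λ | (dilationTimes Q x).Nonempty ∧ entryTime Q x ∈ I}

theorem mem_dilationTimes_iff : s ∈ dilationTimes Q x ↔ 0 < s ∧ s⁻¹ • x ∈ Q :=
  and_congr_right fun hs => Set.mem_smul_set_iff_inv_smul_mem₀ hs.ne' Q x

theorem bddBelow_dilationTimes (Q : Set E) (x : E) : BddBelow (dilationTimes Q x) :=
  ⟨0, fun _ hs => hs.1.le⟩

theorem dilationTimes_zero (h0 : 0 ∉ Q) : dilationTimes Q 0 = ∅ :=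
  Set.eq_empty_of_forall_notMem fun s hs =>
    h0 (by simpa using (mem_dilationTimes_iff.1 hs).2)

theorem isClosed_dilationTimes (hclosed : IsClosed Q) (hbdd : Bornology.IsBounded Q)
    (h0 : 0 ∉ Q) (x : E) : IsClosed (dilationTimes Q x) := by
  rcases eq_or_ne x 0 with rfl | hx
  · rw [dilationTimes_zero h0]
    exact isClosed_empty
  obtain ⟨R, hR, hQ⟩ := hbdd.exists_pos_norm_le
  have hpos : 0 < ‖x‖ / R := by positivity
  have heq : dilationTimes Q x = Ici (‖x‖ / R) ∩ (fun s : ℝ => s⁻¹ • x) ⁻¹' Q := by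
    ext s
    rw [mem_dilationTimes_iff]
    refine ⟨fun ⟨hs, hsx⟩ => ⟨?_, hsx⟩, fun ⟨hs, hsx⟩ => ⟨hpos.trans_le hs, hsx⟩⟩
    have hnorm := hQ _ hsx
    rwa [norm_smul, norm_inv, Real.norm_of_nonneg hs.le, inv_mul_le_iff₀ hs, ← div_le_iff₀ hR]
      at hnorm
  rw [heq]
  refine ContinuousOn.preimage_isClosed_of_isClosed ?_ isClosed_Ici hclosed
  exact (continuousOn_id.inv₀ fun s hs => (hpos.trans_le hs).ne').smul continuousOn_const

theorem ordConnected_dilationTimes (hconv : Convex ℝ Q) (x : E) :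
    (dilationTimes Q x).OrdConnected := by
  refine ⟨fun a ha b hb s hs => ?_⟩
  rw [mem_dilationTimes_iff] at ha hb ⊢
  have hspos : 0 < s := ha.1.trans_le hs.1
  have hline : Convex ℝ ((fun r : ℝ => r • x) ⁻¹' Q) :=
    hconv.linear_preimage (LinearMap.toSpanSingleton ℝ E x)
  exact ⟨hspos, hline.ordConnected.out hb.2 ha.2
    ⟨inv_anti₀ hspos hs.2, inv_anti₀ ha.1 hs.1⟩⟩

theorem entryTime_le (hs : s ∈ dilationTimes Q x) : entryTime Q x ≤ s :=
  csInf_le (bddBelow_dilationTimes Q x) hs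

theorem sep_entryTime_eq_entrants (Q Λ : Set E) (I : Set ℝ) (s : ℝ) :
    {x ∈ entrants Q Λ I | entryTime Q x = s} = entrants Q Λ (I ∩ {s}) := by
  ext x
  simp [entrants, and_assoc]

theorem convex_originHull (Q : Set E) : Convex ℝ (originHull Q) := convex_convexHull ℝ _

theorem zero_mem_originHull (Q : Set E) : 0 ∈ originHull Q :=
  subset_convexHull ℝ _ (mem_insert 0 Q)

theorem subset_originHull (Q : Set E) : Q ⊆ originHull Q :=
  (subset_insert 0 Q).trans (subset_convexHull ℝ _)

theorem smul_originHull_subset (ht : 0 ≤ t) (htb : t ≤ b) :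
    t • originHull Q ⊆ b • originHull Q := by
  rintro _ ⟨q, hq, rfl⟩
  rcases (ht.trans htb).eq_or_lt with rfl | hb
  · exact ⟨q, hq, by rw [le_antisymm htb ht]⟩
  · refine (Set.mem_smul_set_iff_inv_smul_mem₀ hb.ne' _ _).2 ?_
    rw [smul_smul]
    exact (convex_originHull Q).smul_mem_of_zero_mem (zero_mem_originHull Q) hq
      ⟨by positivity, inv_mul_le_one_of_le₀ htb hb.le⟩

theorem smul_subset_smul_originHull (ht : 0 ≤ t) (htb : t ≤ b) : t • Q ⊆ b • originHull Q :=
  (smul_set_mono (subset_originHull Q)).trans (smul_originHull_subset ht htb)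

theorem originHull_eq_Icc_smul (hconv : Convex ℝ Q) (hne : Q.Nonempty) :
    originHull Q = Icc (0 : ℝ) 1 • Q := by
  rw [originHull, convexHull_insert hne, hconv.convexHull_eq]
  ext x
  simp only [convexJoin_singleton_left, mem_iUnion, exists_prop, segment_eq_image, smul_zero,
    zero_add, mem_image, Set.mem_smul]
  tauto

theorem mem_smul_originHull_iff (hconv : Convex ℝ Q) (hne : Q.Nonempty) (hb : 0 ≤ b) :
    x ∈ b • originHull Q ↔ ∃ t ∈ Icc 0 b, x ∈ t • Q := by
  refine ⟨?_, fun ⟨t, ht, hx⟩ => smul_subset_smul_originHull ht.1 ht.2 hx⟩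
  rw [originHull_eq_Icc_smul hconv hne]
  rintro ⟨_, ⟨t, ht, q, hq, rfl⟩, rfl⟩
  exact ⟨b * t, ⟨mul_nonneg hb ht.1, mul_le_of_le_one_right hb ht.2⟩, q, hq, mul_smul b t q⟩

theorem isBounded_originHull (hbdd : Bornology.IsBounded Q) :
    Bornology.IsBounded (originHull Q) :=
  isBounded_convexHull.2 (hbdd.insert 0)

theorem isCompact_originHull (hcomp : IsCompact Q) (hconv : Convex ℝ Q) (hne : Q.Nonempty) :
    IsCompact (originHull Q) := by
  rw [originHull_eq_Icc_smul hconv hne]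
  exact isCompact_Icc.smul_set hcomp

theorem smul_add_smul_ne_zero (hconv : Convex ℝ Q) (h0 : 0 ∉ Q) {p q : E} (hp : p ∈ Q)
    (hq : q ∈ Q) (hs : 0 ≤ s) (ht : 0 < t) : s • p + t • q ≠ 0 := by
  obtain ⟨z, hz, hzeq⟩ := hconv.exists_mem_add_smul_eq hp hq hs ht.le
  rw [← hzeq]
  exact smul_ne_zero (by positivity) fun hz0 => h0 (hz0 ▸ hz)

theorem image_add_originHull_ssubset (hconv : Convex ℝ Q) (h0 : 0 ∉ Q) {q : E} (hq : q ∈ Q)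
    {c : ℝ} (hc : 0 < c) :
    (· + c • q) '' originHull Q ⊂ originHull ((· + c • q) '' Q) := by
  have hmem : ∀ x ∈ originHull Q, ∃ t ∈ Icc (0 : ℝ) 1, ∃ p ∈ Q, t • p = x := fun x hx => by
    rwa [originHull_eq_Icc_smul hconv ⟨q, hq⟩] at hx
  have hconvHull := convex_originHull ((· + c • q) '' Q)
  have hcq : c • q ∈ originHull ((· + c • q) '' Q) := by
    have hq' : (1 + c) • q ∈ originHull ((· + c • q) '' Q) :=
      subset_originHull _ ⟨q, hq, by rw [add_smul, one_smul]⟩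
    have hscale := hconvHull.smul_mem_of_zero_mem (zero_mem_originHull _) hq'
      (t := c / (1 + c)) ⟨by positivity, (div_le_one (by positivity)).2 (by linarith)⟩
    rwa [smul_smul, div_mul_cancel₀ c (by positivity)] at hscale
  refine Set.ssubset_iff_exists.2 ⟨?_, 0, zero_mem_originHull _, ?_⟩
  · rintro _ ⟨x, hx, rfl⟩
    obtain ⟨t, ht, p, hp, rfl⟩ := hmem x hx
    have hp' := subset_originHull _ (mem_image_of_mem (· + c • q) hp)
    convert hconvHull hcq hp' (sub_nonneg.2 ht.2) ht.1 (sub_add_cancel 1 t) using 1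
    module
  · rintro ⟨x, hx, hx0⟩
    obtain ⟨t, ht, p, hp, rfl⟩ := hmem x hx
    exact smul_add_smul_ne_zero hconv h0 hp hq ht.1 hc hx0

end Dilates

/-- A locally finite set: its intersection with every bounded set is finite. -/
def FiniteOnBounded {E : Type*} [Bornology E] (Λ : Set E) : Prop :=
  ∀ B : Set E, Bornology.IsBounded B → (B ∩ Λ).Finite

/-- A nonempty compact convex set that does not contain the origin. -/
structure IsConvexBodyOffOrigin {E : Type*} [NormedAddCommGroup E] [NormedSpace ℝ E]
    (Q : Set E) : Prop where
  isCompact : IsCompact Q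
  convex : Convex ℝ Q
  nonempty : Q.Nonempty
  zero_notMem : 0 ∉ Q

namespace IsConvexBodyOffOrigin

variable {E : Type*} [NormedAddCommGroup E] [NormedSpace ℝ E] {Q Q' Λ : Set E} {a b s : ℝ}

theorem isClosed_dilationTimes (hQ : IsConvexBodyOffOrigin Q) (x : E) :
    IsClosed (dilationTimes Q x) :=
  _root_.isClosed_dilationTimes hQ.isCompact.isClosed hQ.isCompact.isBounded hQ.zero_notMem x

theorem entryTime_mem (hQ : IsConvexBodyOffOrigin Q) {x : E} (hx : (dilationTimes Q x).Nonempty) :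
    entryTime Q x ∈ dilationTimes Q x :=
  (hQ.isClosed_dilationTimes x).csInf_mem hx (bddBelow_dilationTimes Q x)

theorem mem_smul_originHull_iff_entryTime_le (hQ : IsConvexBodyOffOrigin Q) (hb : 0 ≤ b) {x : E} :
    x ∈ b • originHull Q ↔ x = 0 ∨ (dilationTimes Q x).Nonempty ∧ entryTime Q x ≤ b := by
  rw [mem_smul_originHull_iff hQ.convex hQ.nonempty hb]
  constructor
  · rintro ⟨t, ht, hx⟩
    rcases ht.1.eq_or_lt with rfl | htpos
    · exact .inl (by simpa [Set.zero_smul_set hQ.nonempty] using hx)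
    · exact .inr ⟨⟨t, htpos, hx⟩, (entryTime_le ⟨htpos, hx⟩).trans ht.2⟩
  · rintro (rfl | ⟨hne, hle⟩)
    · exact ⟨0, ⟨le_rfl, hb⟩, by simp [Set.zero_smul_set hQ.nonempty]⟩
    · obtain ⟨hpos, hx⟩ := hQ.entryTime_mem hne
      exact ⟨entryTime Q x, ⟨hpos.le, hle⟩, hx⟩

theorem entrants_singleton_eq (hQ : IsConvexBodyOffOrigin Q) (hs : 0 < s) :
    entrants Q Λ {s} = (s • Q ∩ Λ) \ {x | entryTime Q x < s} := by
  ext x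
  constructor
  · rintro ⟨hxΛ, hne, rfl⟩
    exact ⟨⟨(hQ.entryTime_mem hne).2, hxΛ⟩, lt_irrefl (entryTime Q x)⟩
  · rintro ⟨⟨hxs, hxΛ⟩, hnlt⟩
    exact ⟨hxΛ, ⟨s, hs, hxs⟩, (entryTime_le ⟨hs, hxs⟩).antisymm (not_lt.1 hnlt)⟩

theorem entrants_Ioc_eq (hQ : IsConvexBodyOffOrigin Q) (ha : 0 ≤ a) (hab : a ≤ b) :
    entrants Q Λ (Ioc a b) = (b • originHull Q ∩ Λ) \ (a • originHull Q) := by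
  ext x
  rw [Set.mem_sdiff, mem_inter_iff, hQ.mem_smul_originHull_iff_entryTime_le ha,
    hQ.mem_smul_originHull_iff_entryTime_le (ha.trans hab)]
  constructor
  · rintro ⟨hxΛ, hne, hgt, hle⟩
    refine ⟨⟨.inr ⟨hne, hle⟩, hxΛ⟩, ?_⟩
    rintro (rfl | ⟨-, hle'⟩)
    · exact hne.ne_empty (dilationTimes_zero hQ.zero_notMem)
    · exact hle'.not_gt hgt
  · rintro ⟨⟨hx0 | ⟨hne, hle⟩, hxΛ⟩, hna⟩
    · exact absurd (.inl hx0) hna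
    · exact ⟨hxΛ, hne, not_le.1 fun hle' => hna (.inr ⟨hne, hle'⟩), hle⟩

theorem finite_smul_originHull_inter (hQ : IsConvexBodyOffOrigin Q) (hΛ : FiniteOnBounded Λ)
    (b : ℝ) :
    (b • originHull Q ∩ Λ).Finite :=
  hΛ _ ((isBounded_originHull hQ.isCompact.isBounded).smul₀ b)

theorem eventually_smul_inter_eq (hQ : IsConvexBodyOffOrigin Q) (hΛ : FiniteOnBounded Λ)
    (hs : 0 < s) :
    ∀ᶠ t in 𝓝[<] s, t • Q ∩ Λ = (s • Q ∩ Λ) ∩ {x | entryTime Q x < s} := by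
  have hiff : ∀ᶠ t in 𝓝[<] s, ∀ x ∈ s • originHull Q ∩ Λ,
      (t ∈ dilationTimes Q x ↔ s ∈ dilationTimes Q x ∧ entryTime Q x < s) :=
    (eventually_all_finite (hQ.finite_smul_originHull_inter hΛ s)).2 fun x _ =>
      eventually_nhdsLT_mem_iff_of_ordConnected (hQ.isClosed_dilationTimes x)
        (ordConnected_dilationTimes hQ.convex x) (bddBelow_dilationTimes Q x) s
  filter_upwards [hiff, Ioo_mem_nhdsLT hs] with t ht ⟨htpos, hts⟩
  ext x
  constructor
  · rintro ⟨hxt, hxΛ⟩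
    have hxhull := smul_subset_smul_originHull htpos.le hts.le hxt
    obtain ⟨⟨-, hxs⟩, hlt⟩ := (ht x ⟨hxhull, hxΛ⟩).1 ⟨htpos, hxt⟩
    exact ⟨⟨hxs, hxΛ⟩, hlt⟩
  · rintro ⟨⟨hxs, hxΛ⟩, hlt⟩
    have hxhull := smul_subset_smul_originHull hs.le le_rfl hxs
    exact ⟨((ht x ⟨hxhull, hxΛ⟩).2 ⟨⟨hs, hxs⟩, hlt⟩).2, hxΛ⟩

theorem eventually_ncard_add_ncard_entrants (hQ : IsConvexBodyOffOrigin Q) (hΛ : FiniteOnBounded Λ)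
    (hs : 0 < s) :
    ∀ᶠ t in 𝓝[<] s,
      (t • Q ∩ Λ).ncard + (entrants Q Λ {s}).ncard = (s • Q ∩ Λ).ncard := by
  filter_upwards [hQ.eventually_smul_inter_eq hΛ hs] with t ht
  rw [ht, hQ.entrants_singleton_eq hs]
  exact ncard_inter_add_ncard_sdiff_eq_ncard _ _ (hΛ _ (hQ.isCompact.isBounded.smul₀ s))

theorem ncard_entrants_singleton_eq (hQ : IsConvexBodyOffOrigin Q) (hΛ : FiniteOnBounded Λ)
    (hQ' : IsConvexBodyOffOrigin Q') (ha : 0 ≤ a)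
    (heq : ∀ t > a, (t • Q ∩ Λ).ncard = (t • Q' ∩ Λ).ncard) (has : a < s) :
    (entrants Q Λ {s}).ncard = (entrants Q' Λ {s}).ncard := by
  have hs : 0 < s := ha.trans_lt has
  obtain ⟨t, ht, ht', hat⟩ := ((hQ.eventually_ncard_add_ncard_entrants hΛ hs).and
    ((hQ'.eventually_ncard_add_ncard_entrants hΛ hs).and (Ioo_mem_nhdsLT has))).exists
  have hcount_s := heq s has
  have hcount_t := heq t hat.1
  omega

theorem ncard_entrants_Ioc_eq (hQ : IsConvexBodyOffOrigin Q) (hΛ : FiniteOnBounded Λ)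
    (hQ' : IsConvexBodyOffOrigin Q') (ha : 0 ≤ a)
    (heq : ∀ t > a, (t • Q ∩ Λ).ncard = (t • Q' ∩ Λ).ncard) (hab : a ≤ b) :
    (entrants Q Λ (Ioc a b)).ncard = (entrants Q' Λ (Ioc a b)).ncard := by
  have hfinite : ∀ {K : Set E}, IsConvexBodyOffOrigin K → (entrants K Λ (Ioc a b)).Finite :=
    fun hK => by
      rw [hK.entrants_Ioc_eq ha hab]
      exact (hK.finite_smul_originHull_inter hΛ b).sdiff
  refine ncard_eq_of_ncard_fiber_eq (hfinite hQ) (hfinite hQ') (entryTime Q) (entryTime Q')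
    fun s => ?_
  rw [sep_entryTime_eq_entrants, sep_entryTime_eq_entrants]
  by_cases hs : s ∈ Ioc a b
  · rw [inter_eq_right.2 (singleton_subset_iff.2 hs)]
    exact hQ.ncard_entrants_singleton_eq hΛ hQ' ha heq hs.1
  · simp [inter_singleton_eq_empty.2 hs, entrants]

theorem ncard_smul_originHull_add_ncard_entrants (hQ : IsConvexBodyOffOrigin Q)
    (hΛ : FiniteOnBounded Λ) (ha : 0 ≤ a) (hab : a ≤ b) :
    (a • originHull Q ∩ Λ).ncard + (entrants Q Λ (Ioc a b)).ncard =
      (b • originHull Q ∩ Λ).ncard := by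
  have hinter : (b • originHull Q ∩ Λ) ∩ a • originHull Q = a • originHull Q ∩ Λ := by
    rw [inter_right_comm, inter_eq_right.2 (smul_originHull_subset ha hab)]
  rw [hQ.entrants_Ioc_eq ha hab, ← hinter]
  exact ncard_inter_add_ncard_sdiff_eq_ncard _ _ (hQ.finite_smul_originHull_inter hΛ b)

theorem ncard_smul_originHull_sub_eq (hQ : IsConvexBodyOffOrigin Q) (hΛ : FiniteOnBounded Λ)
    (hQ' : IsConvexBodyOffOrigin Q') (ha : 0 ≤ a)
    (heq : ∀ t > a, (t • Q ∩ Λ).ncard = (t • Q' ∩ Λ).ncard) (hab : a ≤ b) :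
    ((b • originHull Q ∩ Λ).ncard : ℝ) - (b • originHull Q' ∩ Λ).ncard =
      (a • originHull Q ∩ Λ).ncard - (a • originHull Q' ∩ Λ).ncard := by
  rw [← hQ.ncard_smul_originHull_add_ncard_entrants hΛ ha hab,
    ← hQ'.ncard_smul_originHull_add_ncard_entrants hΛ ha hab,
    hQ.ncard_entrants_Ioc_eq hΛ hQ' ha heq hab]
  push_cast
  ring

end IsConvexBodyOffOrigin

section Ehrhart

variable {d : ℕ}

theorem latticePts_eq_span (d : ℕ) :
    latticePts d = (Submodule.span ℤ (range (Pi.basisFun ℝ (Fin d))) : Set (Fin d → ℝ)) := by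
  ext x
  simp [latticePts, Module.Basis.mem_span_iff_repr_mem, eq_comm]

theorem finiteOnBounded_latticePts (d : ℕ) : FiniteOnBounded (latticePts d) := by
  intro B hB
  rw [latticePts_eq_span]
  exact ZSpan.setFinite_inter _ hB

theorem tendsto_ehrhart_div_pow {K : Set (Fin d → ℝ)} (hcomp : IsCompact K) (hconv : Convex ℝ K) :
    Tendsto (fun n : ℕ => (ehrhart K n : ℝ) / n ^ d) atTop (𝓝 (volume.real K)) := by
  have hlim := tendsto_card_div_pow_atTop_volume K hcomp.isBounded hcomp.measurableSet
    (hconv.addHaar_frontier volume)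
  rw [Fintype.card_fin] at hlim
  refine hlim.congr' ?_
  filter_upwards [eventually_ne_atTop 0] with n hn
  have hn' : (n : ℝ) ≠ 0 := Nat.cast_ne_zero.2 hn
  congr 2
  rw [ehrhart, Nat.card_coe_set_eq, ← ncard_image_of_injective _ (smul_right_injective _ hn'),
    image_smul, smul_set_inter₀ hn', smul_inv_smul₀ hn', latticePts_eq_span]

theorem volume_originHull_eq_of_ehrhart_eq {Q Q' : Set (Fin d → ℝ)}
    (hQ : IsConvexBodyOffOrigin Q) (hQ' : IsConvexBodyOffOrigin Q') {a : ℝ}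
    (heq : ∀ s > a, ehrhart Q s = ehrhart Q' s) :
    volume.real (originHull Q) = volume.real (originHull Q') := by
  have hd : d ≠ 0 := by
    rintro rfl
    obtain ⟨q, hq⟩ := hQ.nonempty
    exact hQ.zero_notMem (Subsingleton.elim q 0 ▸ hq)
  have hlim : ∀ {K : Set (Fin d → ℝ)}, IsConvexBodyOffOrigin K → Tendsto
      (fun n : ℕ => (ehrhart (originHull K) n : ℝ) / n ^ d) atTop
      (𝓝 (volume.real (originHull K))) := fun hK =>
    tendsto_ehrhart_div_pow (isCompact_originHull hK.isCompact hK.convex hK.nonempty)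
      (convex_originHull _)
  have hconst : ∀ C : ℝ, Tendsto (fun n : ℕ => C / (n : ℝ) ^ d) atTop (𝓝 0) := fun C =>
    ((tendsto_pow_atTop hd).comp tendsto_natCast_atTop_atTop).const_div_atTop C
  refine sub_eq_zero.1 (tendsto_nhds_unique (((hlim hQ).sub (hlim hQ')).congr' ?_) (hconst
    (ehrhart (originHull Q) (max a 0) - ehrhart (originHull Q') (max a 0))))
  filter_upwards [tendsto_natCast_atTop_atTop.eventually_ge_atTop (max a 0)] with n hn
  rw [← sub_div]
  exact congrArg (· / (n : ℝ) ^ d) (hQ.ncard_smul_originHull_sub_eq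
    (finiteOnBounded_latticePts d) hQ' (le_max_right a 0)
    (fun t ht => heq t ((le_max_left a 0).trans_lt ht)) hn)

theorem translateSet_translateSet (P : Set (Fin d → ℝ)) (u w : Fin d → ℝ) :
    translateSet (translateSet P u) w = translateSet P (u + w) := by
  simp only [translateSet, image_image, add_assoc]

theorem interior_translateSet_nonempty {P : Set (Fin d → ℝ)} (hint : (interior P).Nonempty)
    (w : Fin d → ℝ) : (interior (translateSet P w)).Nonempty := by
  have himage : translateSet P w = Homeomorph.addRight w '' P := rfl
  rw [himage, ← Homeomorph.image_interior]
  exact hint.image _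

theorem IsConvexBodyOffOrigin.translateSet_smul {Q : Set (Fin d → ℝ)}
    (hQ : IsConvexBodyOffOrigin Q) {q : Fin d → ℝ} (hq : q ∈ Q) {c : ℝ} (hc : 0 ≤ c) :
    IsConvexBodyOffOrigin (translateSet Q (c • q)) where
  isCompact := hQ.isCompact.image (by fun_prop)
  convex := by
    simpa only [translateSet, add_comm] using hQ.convex.translate (c • q)
  nonempty := hQ.nonempty.image _
  zero_notMem := by
    rintro ⟨p, hp, hp0⟩
    refine smul_add_smul_ne_zero hQ.convex hQ.zero_notMem hq hp hc one_pos ?_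
    rwa [one_smul, add_comm]

theorem volume_originHull_lt_translateSet {Q : Set (Fin d → ℝ)} (hQ : IsConvexBodyOffOrigin Q)
    (hint : (interior Q).Nonempty) {q : Fin d → ℝ} (hq : q ∈ Q) {c : ℝ} (hc : 0 < c) :
    volume.real (originHull Q) < volume.real (originHull (translateSet Q (c • q))) := by
  have hcompact : ∀ {K : Set (Fin d → ℝ)}, IsConvexBodyOffOrigin K → IsCompact (originHull K) :=
    fun hK => isCompact_originHull hK.isCompact hK.convex hK.nonempty
  have hint' : (interior (originHull (translateSet Q (c • q)))).Nonempty :=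
    (interior_translateSet_nonempty hint _).mono (interior_mono (subset_originHull _))
  calc volume.real (originHull Q)
      = volume.real ((· + c • q) '' originHull Q) := by
        simp [Measure.real, image_add_right, measure_preimage_add_right]
    _ < volume.real (originHull (translateSet Q (c • q))) :=
        measureReal_lt_of_ssubset_of_convex (convex_originHull _) hint'
          (hcompact (hQ.translateSet_smul hq hc.le)).measure_ne_top
          ((hcompact hQ).image (by fun_prop)).isClosed
          (image_add_originHull_ssubset hQ.convex hQ.zero_notMem hq hc)

theorem not_bddAbove_ehrhart_translateSet_smul_ne {Q : Set (Fin d → ℝ)}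
    (hQ : IsConvexBodyOffOrigin Q) (hint : (interior Q).Nonempty) {q : Fin d → ℝ} (hq : q ∈ Q)
    {c : ℝ} (hc : 0 < c) :
    ¬BddAbove {s : ℝ | 0 < s ∧ ehrhart (translateSet Q (c • q)) s ≠ ehrhart Q s} := by
  rintro ⟨B, hB⟩
  have heq : ∀ s > max B 0, ehrhart (translateSet Q (c • q)) s = ehrhart Q s := fun s hs => by
    by_contra hne
    exact ((le_max_left B 0).trans_lt hs).not_ge (hB ⟨(le_max_right B 0).trans_lt hs, hne⟩)
  exact (volume_originHull_lt_translateSet hQ hint hq hc).ne'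
    (volume_originHull_eq_of_ehrhart_eq (hQ.translateSet_smul hq hc.le) hQ heq)

end Ehrhart

theorem stmt6_general {d : ℕ} {P : Set (Fin d → ℝ)} (hcomp : IsCompact P) (hconv : Convex ℝ P)
    (hfull : (interior P).Nonempty) (h0 : (0 : Fin d → ℝ) ∉ P)
    {v : Fin d → ℝ} (hv : v ∈ P) {mu fl : ℝ} (hmu : 0 ≤ mu) (hfl : mu < fl) :
    ¬BddAbove {s : ℝ | 0 < s ∧
      ehrhart (translateSet P (fl • v)) s ≠ ehrhart (translateSet P (mu • v)) s} := by
  have hP : IsConvexBodyOffOrigin P := ⟨hcomp, hconv, ⟨v, hv⟩, h0⟩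
  have hmem : (1 + mu) • v ∈ translateSet P (mu • v) := ⟨v, hv, by rw [add_smul, one_smul]⟩
  have hshift : translateSet P (fl • v) =
      translateSet (translateSet P (mu • v)) (((fl - mu) / (1 + mu)) • (1 + mu) • v) := by
    rw [translateSet_translateSet, smul_smul, div_mul_cancel₀ _ (by positivity), ← add_smul,
      add_sub_cancel]
  rw [hshift]
  exact not_bddAbove_ehrhart_translateSet_smul_ne (hP.translateSet_smul hv hmu)
    (interior_translateSet_nonempty hfull _) hmem (div_pos (sub_pos.2 hfl) (by positivity))

/-- for a full-dimensional polytope not containing the origin, any point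
`v ∈ P` and reals `fl > mu ≥ 0`, the Ehrhart functions of `P + fl•v` and `P + mu•v`
differ at infinitely many positive `s`. -/
theorem stmt6 {d : ℕ} (P : Set (Fin d → ℝ)) (hP : IsPolytope P)
    (hfull : (interior P).Nonempty) (h0 : (0 : Fin d → ℝ) ∉ P)
    (v : Fin d → ℝ) (hv : v ∈ P) (mu fl : ℝ) (hmu : 0 ≤ mu) (hfl : mu < fl) :
    {s : ℝ | 0 < s ∧
      ehrhart (translateSet P (fl • v)) s ≠ ehrhart (translateSet P (mu • v)) s}.Infinite := by
  obtain ⟨V, -, rfl⟩ := hP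
  exact fun hfin => stmt6_general (V.finite_toSet.isCompact_convexHull ℝ) (convex_convexHull ℝ _)
    hfull h0 hv hmu hfl hfin.bddAbove
end

section
/- Let P ⊆ ℝ^d be a semi-rational polytope whose affine span has dimension l, let v₀ be a point of the affine span of P, and let A be a unimodular linear transformation of ℝ^d (given by an integer matrix with determinant ±1) that maps the linear subspace (aff P) − v₀ onto ℝ^l × {0}^{d−l}. Let P' ⊆ ℝ^l be the image of A(P − v₀) under the projection to the first l coordinates. Then for every ε > 0 there exists N > 0 such that for every vector v ∈ ℝ^d and every real s > N for which the affine span of s•(P + v) contains an integer point, one has |L_{P+v}(s)/s^l − vol_{ℝ^l}(P')| < ε, where vol_{ℝ^l} is Lebesgue measure on ℝ^l. (The quantity vol_{ℝ^l}(P') is the relative volume of P.) -/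
open Set MeasureTheory Pointwise

/-!
Rounding each coordinate down on the grid `s⁻¹ℤ^l - w` moves every point by at most `1 / s`, and
the set of points that are rounded into `K` has volume `L_{K+w}(s) / s^l`. It differs from `K` only
near the frontier of `K`, by an error that depends on `s` but not on `w`. So the count is
asymptotically the volume, uniformly in `w`, as soon as `K` is bounded with null frontier.

For `P` of lower dimension, subtract a lattice point `x = s • (q + v)` of the affine span, with
`q ∈ aff P`, and apply `A`. On the direction of `aff P`, the first `l` coordinates of `A` form an
injective linear map that matches the lattice points of `ℝ^d` with those of `ℝ^l`, hence
`L_{P+v}(s) = L_{P'+w}(s)` for some `w`.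
-/

open Filter Metric Topology Bornology

section MeasurePerturbation

variable {X : Type*} [MeasurableSpace X]

theorem tendsto_measure_cthickening_inter_cthickening_compl [PseudoEMetricSpace X]
    [OpensMeasurableSpace X] {μ : Measure X} {K : Set X}
    (hK : ∃ r > 0, μ (cthickening r K) ≠ ⊤) :
    Tendsto (fun r => μ (cthickening r K ∩ cthickening r Kᶜ)) (𝓝[>] 0) (𝓝 (μ (frontier K))) := by
  have hfrontier : frontier K = ⋂ r > 0, cthickening r K ∩ cthickening r Kᶜ := by
    simp only [frontier_eq_closure_inter_closure, closure_eq_iInter_cthickening, gt_iff_lt,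
      iInter_inter_distrib]
  obtain ⟨r, hr, hfin⟩ := hK
  rw [hfrontier]
  exact tendsto_measure_biInter_gt
    (fun r _ => (isClosed_cthickening.inter isClosed_cthickening).measurableSet.nullMeasurableSet)
    (fun _ _ _ h => inter_subset_inter (cthickening_mono h _) (cthickening_mono h _))
    ⟨r, hr, ne_top_of_le_ne_top hfin (measure_mono inter_subset_left)⟩

theorem abs_measureReal_sub_le_of_subset_union {μ : Measure X} {s t e : Set X}
    (hst : s ⊆ t ∪ e) (hts : t ⊆ s ∪ e) (ht : μ t ≠ ⊤) (he : μ e ≠ ⊤) :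
    |μ.real s - μ.real t| ≤ μ.real e := by
  have hs : μ s ≠ ⊤ := ne_top_of_le_ne_top (measure_union_ne_top ht he) (measure_mono hst)
  have hst_le : μ.real s ≤ μ.real t + μ.real e :=
    (measureReal_mono hst (measure_union_ne_top ht he)).trans (measureReal_union_le t e)
  have hts_le : μ.real t ≤ μ.real s + μ.real e :=
    (measureReal_mono hts (measure_union_ne_top hs he)).trans (measureReal_union_le s e)
  exact abs_sub_le_iff.2 ⟨by linarith, by linarith⟩

theorem abs_measureReal_preimage_sub_le [PseudoMetricSpace X] {μ : Measure X} {K : Set X} {r : ℝ}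
    (hK : μ (cthickening r K) ≠ ⊤) {f : X → X} (hf : ∀ x, dist x (f x) ≤ r) :
    |μ.real (f ⁻¹' K) - μ.real K| ≤ μ.real (cthickening r K ∩ cthickening r Kᶜ) := by
  refine abs_measureReal_sub_le_of_subset_union (fun x hfx => ?_) (fun x hx => ?_)
    (ne_top_of_le_ne_top hK (measure_mono (self_subset_cthickening K)))
    (ne_top_of_le_ne_top hK (measure_mono inter_subset_left))
  · by_cases hx : x ∈ K
    · exact .inl hx
    · exact .inr ⟨mem_cthickening_of_dist_le x _ r K hfx (hf x), self_subset_cthickening Kᶜ hx⟩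
  · by_cases hfx : f x ∈ K
    · exact .inl hfx
    · exact .inr ⟨self_subset_cthickening K hx, mem_cthickening_of_dist_le x _ r Kᶜ hfx (hf x)⟩

theorem eventually_forall_abs_measureReal_preimage_sub_lt [PseudoMetricSpace X] [ProperSpace X]
    [OpensMeasurableSpace X] {μ : Measure X} [IsFiniteMeasureOnCompacts μ] {K : Set X}
    (hK : IsBounded K) (hfrontier : μ (frontier K) = 0) {ε : ℝ} (hε : 0 < ε) :
    ∀ᶠ r in 𝓝[>] 0, ∀ f : X → X, (∀ x, dist x (f x) ≤ r) →
      |μ.real (f ⁻¹' K) - μ.real K| < ε := by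
  have hfin (r : ℝ) : μ (cthickening r K) ≠ ⊤ := hK.cthickening.measure_lt_top.ne
  have hlim := tendsto_measure_cthickening_inter_cthickening_compl ⟨1, one_pos, hfin 1⟩
  rw [hfrontier] at hlim
  have hlim_real := (ENNReal.tendsto_toReal ENNReal.zero_ne_top).comp hlim
  filter_upwards [hlim_real.eventually_lt_const hε] with r hr f hf
  exact (abs_measureReal_preimage_sub_le (hfin r) hf).trans_lt hr

end MeasurePerturbation

section LatticeCount

variable {d : ℕ}

theorem countable_latticePts : (latticePts d).Countable := by
  refine (countable_range fun (m : Fin d → ℤ) i => (m i : ℝ)).mono fun x hx => ?_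
  choose m hm using hx
  exact ⟨m, (funext hm).symm⟩

/-- Coordinatewise rounding down: the lattice point whose half-open unit cube contains `x`. It is
valued in `ℝ^d`, so that its fibres can be compared with subsets of `latticePts d`. -/
noncomputable def latticeFloor (x : Fin d → ℝ) : Fin d → ℝ := fun i => ⌊x i⌋

theorem latticeFloor_mem_latticePts (x : Fin d → ℝ) : latticeFloor x ∈ latticePts d :=
  fun i => ⟨⌊x i⌋, rfl⟩

theorem dist_latticeFloor_le_one (x : Fin d → ℝ) : dist x (latticeFloor x) ≤ 1 := by
  refine (dist_pi_le_iff zero_le_one).2 fun i => ?_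
  rw [latticeFloor, Real.dist_eq, Int.self_sub_floor, Int.abs_fract]
  exact (Int.fract_lt_one _).le

theorem latticeFloor_preimage_singleton {y : Fin d → ℝ} (hy : y ∈ latticePts d) :
    latticeFloor ⁻¹' {y} = pi univ fun i => Ico (y i) (y i + 1) := by
  choose m hm using hy
  ext x
  simp [latticeFloor, funext_iff, hm, Int.floor_eq_iff]

theorem volume_latticeFloor_preimage (T : Set (Fin d → ℝ)) :
    volume (latticeFloor ⁻¹' T) = (T ∩ latticePts d).encard := by
  have hcubes : latticeFloor ⁻¹' T = ⋃ y ∈ T ∩ latticePts d, latticeFloor ⁻¹' {y} := by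
    ext x
    simp [latticeFloor_mem_latticePts]
  have hdisjoint : (T ∩ latticePts d).PairwiseDisjoint fun y => latticeFloor ⁻¹' {y} :=
    fun _ _ _ _ hyz => (disjoint_singleton.2 hyz).preimage latticeFloor
  have hmeasurable : ∀ y ∈ T ∩ latticePts d, MeasurableSet (latticeFloor ⁻¹' {y}) := by
    intro y hy
    rw [latticeFloor_preimage_singleton hy.2]
    exact MeasurableSet.univ_pi fun i => measurableSet_Ico
  have hvolume (y : ↥(T ∩ latticePts d)) : volume (latticeFloor ⁻¹' {y.1}) = 1 := by
    simp [latticeFloor_preimage_singleton y.2.2, Real.volume_pi_Ico]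
  rw [hcubes, measure_biUnion (countable_latticePts.mono inter_subset_right) hdisjoint hmeasurable]
  simp only [hvolume, ENNReal.tsum_set_const, mul_one]

theorem volumeReal_latticeFloor_preimage (T : Set (Fin d → ℝ)) :
    volume.real (latticeFloor ⁻¹' T) = (T ∩ latticePts d).ncard := by
  rw [measureReal_def, volume_latticeFloor_preimage, ncard_def]
  cases (T ∩ latticePts d).encard <;> simp

/-- Coordinatewise rounding down to the grid `s⁻¹ℤ^d - w`, whose points in `K` are in bijection
with the lattice points of `s • (K + w)`. -/
noncomputable def gridFloor (s : ℝ) (w x : Fin d → ℝ) : Fin d → ℝ :=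
  s⁻¹ • latticeFloor (s • (x + w)) - w

theorem dist_gridFloor_le {s : ℝ} (hs : 0 < s) (w x : Fin d → ℝ) :
    dist x (gridFloor s w x) ≤ s⁻¹ := by
  calc dist x (gridFloor s w x)
      = dist (s⁻¹ • s • (x + w)) (s⁻¹ • latticeFloor (s • (x + w))) := by
        rw [inv_smul_smul₀ hs.ne', gridFloor, ← dist_add_right _ _ w, sub_add_cancel]
    _ = s⁻¹ * dist (s • (x + w)) (latticeFloor (s • (x + w))) := by
        rw [dist_smul₀, Real.norm_of_nonneg (inv_nonneg.2 hs.le)]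
    _ ≤ s⁻¹ := mul_le_of_le_one_right (inv_nonneg.2 hs.le) (dist_latticeFloor_le_one _)

theorem mem_smul_translateSet_iff {s : ℝ} (hs : s ≠ 0) {K : Set (Fin d → ℝ)} {w y : Fin d → ℝ} :
    y ∈ s • translateSet K w ↔ s⁻¹ • y - w ∈ K := by
  rw [mem_smul_set_iff_inv_smul_mem₀ hs, translateSet, image_add_right, mem_preimage,
    sub_eq_add_neg]

theorem volumeReal_gridFloor_preimage {s : ℝ} (hs : 0 < s) (w : Fin d → ℝ) (K : Set (Fin d → ℝ)) :
    volume.real (gridFloor s w ⁻¹' K) = ehrhart (translateSet K w) s / s ^ d := by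
  have hpreimage : gridFloor s w ⁻¹' K =
      (· + w) ⁻¹' ((s • ·) ⁻¹' (latticeFloor ⁻¹' (s • translateSet K w))) := by
    ext x
    simp only [mem_preimage, mem_smul_translateSet_iff hs.ne', gridFloor]
  rw [hpreimage, measureReal_def, measure_preimage_add_right,
    Measure.addHaar_preimage_smul _ hs.ne', ENNReal.toReal_mul, ← measureReal_def,
    volumeReal_latticeFloor_preimage, Module.finrank_fin_fun, abs_of_pos (by positivity),
    ENNReal.toReal_ofReal (by positivity), ehrhart, div_eq_inv_mul]

theorem exists_forall_abs_ehrhart_translateSet_div_sub_volumeReal_lt {K : Set (Fin d → ℝ)}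
    (hK : IsBounded K) (hfrontier : volume (frontier K) = 0) {ε : ℝ} (hε : 0 < ε) :
    ∃ N : ℝ, 0 < N ∧ ∀ (w : Fin d → ℝ) (s : ℝ), N < s →
      |(ehrhart (translateSet K w) s : ℝ) / s ^ d - volume.real K| < ε := by
  have hsmall := tendsto_inv_atTop_nhdsGT_zero.eventually
    (eventually_forall_abs_measureReal_preimage_sub_lt hK hfrontier hε)
  obtain ⟨N, hN, hclose⟩ := (atTop_basis_Ioi' (0 : ℝ)).eventually_iff.1 hsmall
  refine ⟨N, hN, fun w s hs => ?_⟩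
  have hs_pos : 0 < s := hN.trans hs
  rw [← volumeReal_gridFloor_preimage hs_pos]
  exact hclose hs (gridFloor s w) (dist_gridFloor_le hs_pos w)

end LatticeCount

section LatticeReduction

variable {d l : ℕ}

theorem sub_mem_latticePts_iff {x y : Fin d → ℝ} (hx : x ∈ latticePts d) :
    y - x ∈ latticePts d ↔ y ∈ latticePts d := by
  refine forall_congr' fun i => ?_
  obtain ⟨m, hm⟩ := hx i
  rw [Pi.sub_apply, hm]
  constructor
  · rintro ⟨k, hk⟩
    exact ⟨k + m, by rw [Int.cast_add, ← hk, sub_add_cancel]⟩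
  · rintro ⟨k, hk⟩
    exact ⟨k - m, by rw [Int.cast_sub, hk]⟩

theorem zero_mem_latticePts : (0 : Fin d → ℝ) ∈ latticePts d :=
  fun _ => ⟨0, by simp⟩

theorem eq_zero_of_forall_smul_mem_latticePts {u : Fin d → ℝ}
    (hu : ∀ t : ℝ, t • u ∈ latticePts d) : u = 0 := by
  funext i
  by_contra hui
  obtain ⟨m, hm⟩ := hu (2 * u i)⁻¹ i
  have htwo : (2 * m : ℝ) = 1 := by
    rw [← hm, Pi.smul_apply, smul_eq_mul]
    field_simp [show u i ≠ 0 from hui]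
  have htwo_int : 2 * m = 1 := by exact_mod_cast htwo
  omega

theorem injOn_of_mem_latticePts_iff {T : (Fin d → ℝ) →ₗ[ℝ] (Fin l → ℝ)}
    {V : Submodule ℝ (Fin d → ℝ)} (hT : ∀ u ∈ V, T u ∈ latticePts l ↔ u ∈ latticePts d) :
    InjOn T V := by
  intro x hx y hy hxy
  refine sub_eq_zero.1 (eq_zero_of_forall_smul_mem_latticePts fun t => ?_)
  rw [← hT _ (V.smul_mem t (V.sub_mem hx hy)), map_smul, map_sub, hxy, sub_self, smul_zero]
  exact zero_mem_latticePts

theorem mem_affineSpan_smul_translateSet {P : Set (Fin d → ℝ)} {v x : Fin d → ℝ} {s : ℝ} :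
    x ∈ affineSpan ℝ (s • translateSet P v) ↔ ∃ q ∈ affineSpan ℝ P, s • (q + v) = x := by
  let f : (Fin d → ℝ) →ᵃ[ℝ] (Fin d → ℝ) := s • (AffineMap.id ℝ _ + AffineMap.const ℝ _ v)
  have himage : s • translateSet P v = f '' P := by
    rw [translateSet, ← image_smul, image_image]
    rfl
  rw [himage, ← AffineSubspace.map_span]
  rfl

theorem ehrhart_translateSet_eq_ehrhart_translateSet_image {T : (Fin d → ℝ) →ₗ[ℝ] (Fin l → ℝ)}
    {P : Set (Fin d → ℝ)}
    (hT : ∀ u ∈ (affineSpan ℝ P).direction, T u ∈ latticePts l ↔ u ∈ latticePts d)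
    {q v : Fin d → ℝ} {s : ℝ} (hq : q ∈ affineSpan ℝ P) (hqv : s • (q + v) ∈ latticePts d) :
    ehrhart (translateSet P v) s = ehrhart (translateSet (T '' P) (-T q)) s := by
  have hsub (p : Fin d → ℝ) : s • (p + v) - s • (q + v) = s • (p - q) := by module
  have hdir {p : Fin d → ℝ} (hp : p ∈ P) : s • (p - q) ∈ (affineSpan ℝ P).direction :=
    Submodule.smul_mem _ s (AffineSubspace.vsub_mem_direction (subset_affineSpan ℝ P hp) hq)
  have himage (p : Fin d → ℝ) : T (s • (p - q)) = s • (T p + -T q) := by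
    rw [map_smul, map_sub, sub_eq_add_neg]
  refine BijOn.ncard_eq (f := fun y => T (y - s • (q + v))) ⟨?_, ?_, ?_⟩
  · rintro _ ⟨⟨_, ⟨p, hp, rfl⟩, rfl⟩, hlattice⟩
    rw [← sub_mem_latticePts_iff hqv] at hlattice
    simp only [hsub] at hlattice ⊢
    exact ⟨⟨_, ⟨T p, mem_image_of_mem T hp, rfl⟩, (himage p).symm⟩, (hT _ (hdir hp)).2 hlattice⟩
  · rintro _ ⟨⟨_, ⟨p, hp, rfl⟩, rfl⟩, -⟩ _ ⟨⟨_, ⟨p', hp', rfl⟩, rfl⟩, -⟩ heq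
    simp only [hsub] at heq ⊢
    exact sub_left_inj.1 ((hsub p).trans
      ((injOn_of_mem_latticePts_iff hT (hdir hp) (hdir hp') heq).trans (hsub p').symm))
  · rintro _ ⟨⟨_, ⟨_, ⟨p, hp, rfl⟩, rfl⟩, rfl⟩, hlattice⟩
    simp only [← himage] at hlattice ⊢
    rw [hT _ (hdir hp), ← hsub, sub_mem_latticePts_iff hqv] at hlattice
    exact ⟨s • (p + v), ⟨⟨_, ⟨p, hp, rfl⟩, rfl⟩, hlattice⟩, congrArg T (hsub p)⟩

theorem exists_forall_abs_ehrhart_translateSet_div_sub_volumeReal_image_lt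
    {T : (Fin d → ℝ) →ₗ[ℝ] (Fin l → ℝ)} {P : Set (Fin d → ℝ)} (hP : IsBounded P)
    (hT : ∀ u ∈ (affineSpan ℝ P).direction, T u ∈ latticePts l ↔ u ∈ latticePts d)
    (hfrontier : volume (frontier (T '' P)) = 0) {ε : ℝ} (hε : 0 < ε) :
    ∃ N : ℝ, 0 < N ∧ ∀ (v : Fin d → ℝ) (s : ℝ), N < s →
      (∃ x ∈ affineSpan ℝ (s • translateSet P v), x ∈ latticePts d) →
      |(ehrhart (translateSet P v) s : ℝ) / s ^ l - volume.real (T '' P)| < ε := by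
  have hTP : IsBounded (T '' P) := T.toContinuousLinearMap.lipschitz.isBounded_image hP
  obtain ⟨N, hN, hcount⟩ :=
    exists_forall_abs_ehrhart_translateSet_div_sub_volumeReal_lt hTP hfrontier hε
  refine ⟨N, hN, fun v s hs ⟨x, hx, hlattice⟩ => ?_⟩
  obtain ⟨q, hq, rfl⟩ := mem_affineSpan_smul_translateSet.1 hx
  rw [ehrhart_translateSet_eq_ehrhart_translateSet_image hT hq hlattice]
  exact hcount (-T q) s hs

end LatticeReduction

section UnimodularChart

variable {d l : ℕ}

theorem map_intCast_mulVec_mem_latticePts (A : Matrix (Fin l) (Fin d) ℤ) {x : Fin d → ℝ}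
    (hx : x ∈ latticePts d) : (A.map (Int.cast : ℤ → ℝ)).mulVec x ∈ latticePts l := by
  choose m hm using hx
  exact fun i => ⟨A.mulVec m i, by simp [Matrix.mulVec, dotProduct, hm]⟩

theorem map_intCast_mulVec_mem_latticePts_iff {A : Matrix (Fin d) (Fin d) ℤ} (hA : IsUnit A.det)
    {x : Fin d → ℝ} : (A.map (Int.cast : ℤ → ℝ)).mulVec x ∈ latticePts d ↔ x ∈ latticePts d := by
  refine ⟨fun hAx => ?_, map_intCast_mulVec_mem_latticePts A⟩
  have hinv : A⁻¹.map (Int.cast : ℤ → ℝ) * A.map (Int.cast : ℤ → ℝ) = 1 := by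
    have := Matrix.map_mul (L := A⁻¹) (M := A) (f := Int.castRingHom ℝ)
    rw [Matrix.nonsing_inv_mul A hA] at this
    simpa using this.symm
  simpa [Matrix.mulVec_mulVec, hinv] using map_intCast_mulVec_mem_latticePts A⁻¹ hAx

theorem comp_castLE_mem_latticePts_iff (hl : l ≤ d) {y : Fin d → ℝ}
    (hy : ∀ i : Fin d, l ≤ (i : ℕ) → y i = 0) :
    y ∘ Fin.castLE hl ∈ latticePts l ↔ y ∈ latticePts d := by
  refine ⟨fun h i => ?_, fun h i => h (Fin.castLE hl i)⟩
  rcases lt_or_ge (i : ℕ) l with hi | hi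
  · exact h ⟨i, hi⟩
  · exact ⟨0, by rw [hy i hi, Int.cast_zero]⟩

/-- The linear map sending `x` to the first `l` coordinates of `A x`. For unimodular `A` taking a
subspace into `ℝ^l × {0}^{d-l}`, it is a lattice-preserving chart of that subspace. -/
noncomputable def unimodularChart (hl : l ≤ d) (A : Matrix (Fin d) (Fin d) ℤ) :
    (Fin d → ℝ) →ₗ[ℝ] (Fin l → ℝ) :=
  LinearMap.funLeft ℝ ℝ (Fin.castLE hl) ∘ₗ Matrix.toLin' (A.map (Int.cast : ℤ → ℝ))

theorem unimodularChart_mem_latticePts_iff (hl : l ≤ d) {A : Matrix (Fin d) (Fin d) ℤ}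
    (hA : IsUnit A.det) {u : Fin d → ℝ}
    (hu : ∀ i : Fin d, l ≤ (i : ℕ) → (A.map (Int.cast : ℤ → ℝ)).mulVec u i = 0) :
    unimodularChart hl A u ∈ latticePts l ↔ u ∈ latticePts d :=
  (comp_castLE_mem_latticePts_iff hl hu).trans (map_intCast_mulVec_mem_latticePts_iff hA)

theorem image_castLE_image_mulVec_image_sub (hl : l ≤ d) (A : Matrix (Fin d) (Fin d) ℤ)
    (v₀ : Fin d → ℝ) (P : Set (Fin d → ℝ)) :
    (fun y : Fin d → ℝ => fun i : Fin l => y (Fin.castLE hl i)) ''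
        ((fun x : Fin d → ℝ => fun i => ∑ j, (A i j : ℝ) * x j) '' ((fun x => x - v₀) '' P)) =
      translateSet (unimodularChart hl A '' P) (-unimodularChart hl A v₀) := by
  simp only [translateSet, image_image, ← sub_eq_add_neg, ← map_sub]
  rfl

theorem mulVec_eq_zero_of_mem_direction {A : Matrix (Fin d) (Fin d) ℤ} {v₀ : Fin d → ℝ}
    {Q : AffineSubspace ℝ (Fin d → ℝ)}
    (hQ : (fun x : Fin d → ℝ => fun i => ∑ j, (A i j : ℝ) * x j) ''
        ((fun x => x - v₀) '' (Q : Set (Fin d → ℝ)))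
      ⊆ {y : Fin d → ℝ | ∀ i : Fin d, l ≤ (i : ℕ) → y i = 0})
    {u : Fin d → ℝ} (hu : u ∈ Q.direction) {i : Fin d} (hi : l ≤ (i : ℕ)) :
    (A.map (Int.cast : ℤ → ℝ)).mulVec u i = 0 := by
  have hmem {p : Fin d → ℝ} (hp : p ∈ Q) : (A.map (Int.cast : ℤ → ℝ)).mulVec (p - v₀) i = 0 :=
    hQ (mem_image_of_mem _ (mem_image_of_mem _ hp)) i hi
  rcases Q.eq_bot_or_nonempty with rfl | hne
  · rw [AffineSubspace.direction_bot, Submodule.mem_bot] at hu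
    simp [hu]
  · obtain ⟨p, hp, q, hq, rfl⟩ := (AffineSubspace.mem_direction_iff_eq_vsub hne u).1 hu
    rw [vsub_eq_sub, ← sub_sub_sub_cancel_right p q v₀, Matrix.mulVec_sub, Pi.sub_apply,
      hmem hp, hmem hq, sub_self]

end UnimodularChart

section Translate

variable {d : ℕ}

theorem volume_translateSet (K : Set (Fin d → ℝ)) (v : Fin d → ℝ) :
    volume (translateSet K v) = volume K := by
  rw [translateSet, image_add_right, measure_preimage_add_right]

theorem frontier_translateSet (K : Set (Fin d → ℝ)) (v : Fin d → ℝ) :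
    frontier (translateSet K v) = translateSet (frontier K) v :=
  ((Homeomorph.addRight v).image_frontier K).symm

theorem convex_translateSet {K : Set (Fin d → ℝ)} (hK : Convex ℝ K) (v : Fin d → ℝ) :
    Convex ℝ (translateSet K v) := by
  simpa only [translateSet, add_comm] using hK.translate v

end Translate

section Polytope

variable {d : ℕ}

theorem IsPolytope.convex {P : Set (Fin d → ℝ)} (hP : IsPolytope P) : Convex ℝ P := by
  obtain ⟨V, -, rfl⟩ := hP
  exact convex_convexHull ℝ _

theorem IsPolytope.isBounded {P : Set (Fin d → ℝ)} (hP : IsPolytope P) : IsBounded P := by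
  obtain ⟨V, -, rfl⟩ := hP
  exact isBounded_convexHull.2 V.finite_toSet.isBounded

end Polytope

theorem stmt9_general {d l : ℕ} (hl : l ≤ d) {P : Set (Fin d → ℝ)} (hP : IsBounded P)
    {v₀ : Fin d → ℝ} {A : Matrix (Fin d) (Fin d) ℤ} (hA : IsUnit A.det)
    (hmap : (fun x : Fin d → ℝ => fun i => ∑ j, (A i j : ℝ) * x j) ''
        ((fun x => x - v₀) '' (affineSpan ℝ P : Set (Fin d → ℝ)))
      ⊆ {y : Fin d → ℝ | ∀ i : Fin d, l ≤ (i : ℕ) → y i = 0})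
    {P' : Set (Fin l → ℝ)}
    (hP' : P' = (fun y : Fin d → ℝ => fun i : Fin l => y (Fin.castLE hl i)) ''
        ((fun x : Fin d → ℝ => fun i => ∑ j, (A i j : ℝ) * x j) ''
          ((fun x => x - v₀) '' P)))
    (hfrontier : volume (frontier P') = 0) {ε : ℝ} (hε : 0 < ε) :
    ∃ N : ℝ, 0 < N ∧ ∀ (v : Fin d → ℝ) (s : ℝ), N < s →
      (∃ x ∈ affineSpan ℝ (s • translateSet P v), x ∈ latticePts d) →
      |(ehrhart (translateSet P v) s : ℝ) / s ^ l - (volume P').toReal| < ε := by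
  rw [image_castLE_image_mulVec_image_sub] at hP'
  rw [hP', frontier_translateSet, volume_translateSet] at hfrontier
  rw [hP', volume_translateSet]
  exact exists_forall_abs_ehrhart_translateSet_div_sub_volumeReal_image_lt hP
    (fun u hu => unimodularChart_mem_latticePts_iff hl hA fun i hi =>
      mulVec_eq_zero_of_mem_direction hmap hu hi) hfrontier hε

/-- for an `l`-dimensional semi-rational polytope, `L_{P+v}(s)/s^l`
converges (uniformly in `v`, along those `s` for which the affine span of `s•(P+v)`
contains a lattice point) to the relative volume of `P`, computed as the `l`-dimensional
volume of a unimodular image of `P` projected to `ℝ^l`. -/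
theorem stmt9 {d l : ℕ} (hl : l ≤ d) (P : Set (Fin d → ℝ))
    (hP : IsSemiRationalPolytope P)
    (hdim : Module.finrank ℝ (affineSpan ℝ P).direction = l)
    (v₀ : Fin d → ℝ) (hv₀ : v₀ ∈ affineSpan ℝ P)
    (A : Matrix (Fin d) (Fin d) ℤ) (hA : A.det = 1 ∨ A.det = -1)
    (hmap : (fun x : Fin d → ℝ => fun i => ∑ j, (A i j : ℝ) * x j) ''
        ((fun x => x - v₀) '' (affineSpan ℝ P : Set (Fin d → ℝ)))
      = {y : Fin d → ℝ | ∀ i : Fin d, l ≤ (i : ℕ) → y i = 0})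
    (P' : Set (Fin l → ℝ))
    (hP' : P' = (fun y : Fin d → ℝ => fun i : Fin l => y (Fin.castLE hl i)) ''
        ((fun x : Fin d → ℝ => fun i => ∑ j, (A i j : ℝ) * x j) ''
          ((fun x => x - v₀) '' P))) :
    ∀ ε : ℝ, 0 < ε → ∃ N : ℝ, 0 < N ∧ ∀ (v : Fin d → ℝ) (s : ℝ), N < s →
      (∃ x ∈ affineSpan ℝ (s • translateSet P v), x ∈ latticePts d) →
      |(ehrhart (translateSet P v) s : ℝ) / s ^ l - (volume P').toReal| < ε := by
  have hconvex : Convex ℝ P' := by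
    rw [hP', image_castLE_image_mulVec_image_sub]
    exact convex_translateSet (hP.1.convex.linear_image _) _
  exact fun ε hε => stmt9_general hl hP.1.isBounded (Int.isUnit_iff.2 hA) hmap.subset hP'
    (hconvex.addHaar_frontier volume) hε
end
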